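/- arXiv:1805.06007 — 2 statements merged into one kernel-verified Lean document; each statement's English description precedes it below -/
import Mathlib

section
/- Let Ω = 𝕋² × (−h, 0) with 𝕋² = ℝ²/ℤ² and h > 0. There exists a constant C > 0 such that for all smooth functions v : Ω̄ → ℝ² (periodic in the horizontal variables), φ : Ω̄ → ℝ, and ψ : Ω̄ → ℝ, one has │∫_Ω ( ∫_{−h}^{z} ∇₂·v(x, y, ζ) dζ ) φ(x,y,z) ψ(x,y,z) dx dy dz│ ≤ C ‖∇v‖_{L²(Ω)}^{1/2} (‖∇v‖_{L²(Ω)} + ‖∇∇v‖_{L²(Ω)})^{1/2} ‖φ‖_{L²(Ω)}^{1/2} (‖φ‖_{L²(Ω)} + ‖∇φ‖_{L²(Ω)})^{1/2} ‖ψ‖_{L²(Ω)}. -/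
open MeasureTheory

/-- The measure on the fundamental domain `(0,1)² × (-h,0)` of the slab
`Ω = 𝕋² × (-h, 0)`. -/
noncomputable def slabMeasure (h : ℝ) : Measure (ℝ × ℝ × ℝ) :=
  volume.restrict (Set.Ioo (0 : ℝ) 1 ×ˢ Set.Ioo (0 : ℝ) 1 ×ˢ Set.Ioo (-h) 0)

/-- A function on `ℝ³` represents a function on `Ω = 𝕋² × (-h,0)` if it is
`1`-periodic in both horizontal variables. -/
def HorizontallyPeriodic {α : Type*} (f : ℝ × ℝ × ℝ → α) : Prop :=
  (∀ x y z : ℝ, f (x + 1, y, z) = f (x, y, z)) ∧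
    ∀ x y z : ℝ, f (x, y + 1, z) = f (x, y, z)

/-- The horizontal divergence `∇₂·v = ∂ₓv₁ + ∂ᵧv₂` of a horizontal vector field. -/
noncomputable def divH (v : ℝ × ℝ × ℝ → ℝ × ℝ) (p : ℝ × ℝ × ℝ) : ℝ :=
  fderiv ℝ (fun q => (v q).1) p (1, 0, 0) + fderiv ℝ (fun q => (v q).2) p (0, 1, 0)

open scoped ENNReal

theorem sq_le_integral_sq_add_deriv {g g' : ℝ → ℝ} (hg : ∀ t, HasDerivAt g (g' t) t)
    (hg' : Continuous g') {s : ℝ} (hs : s ∈ Set.Ioo (0 : ℝ) 1) :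
    g s ^ 2 ≤ ∫ t in (0 : ℝ)..1, (g t ^ 2 + 2 * (|g t| * |g' t|)) := by
  have hgc : Continuous g := continuous_iff_continuousAt.2 fun t => (hg t).continuousAt
  set B : ℝ := ∫ t in (0 : ℝ)..1, 2 * (|g t| * |g' t|) with hB
  have hle : ∀ t ∈ Set.Icc (0 : ℝ) 1, g s ^ 2 - B ≤ g t ^ 2 := by
    intro t ht
    have hftc : ∫ r in t..s, 2 * g r * g' r = g s ^ 2 - g t ^ 2 := by
      refine intervalIntegral.integral_eq_sub_of_hasDerivAt (f := fun r => g r ^ 2) ?_ ?_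
      · intro r _
        simpa using (hg r).fun_pow 2
      · exact (by fun_prop : Continuous fun r => 2 * g r * g' r).intervalIntegrable _ _
    have hbd : |∫ r in t..s, 2 * g r * g' r| ≤ B := by
      have h1 := intervalIntegral.norm_integral_le_integral_norm_uIoc
        (f := fun r => 2 * g r * g' r) (a := t) (b := s) (μ := volume)
      rw [Real.norm_eq_abs] at h1
      refine h1.trans ?_
      rw [hB, intervalIntegral.integral_of_le zero_le_one]
      have heq : (fun r => ‖2 * g r * g' r‖) = fun r => 2 * (|g r| * |g' r|) := by
        ext r
        simp [mul_assoc]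
      rw [heq]
      refine setIntegral_mono_set ?_ ?_ ?_
      · have := (by fun_prop : Continuous fun r => 2 * (|g r| * |g' r|)).intervalIntegrable
          (μ := volume) 0 1
        exact (intervalIntegrable_iff_integrableOn_Ioc_of_le zero_le_one).1 this
      · exact Filter.Eventually.of_forall fun r => by positivity
      · refine Filter.Eventually.of_forall ?_
        intro r hr
        replace hr : min t s < r ∧ r ≤ max t s := hr
        exact ⟨(le_min ht.1 hs.1.le).trans_lt hr.1, hr.2.trans (max_le ht.2 hs.2.le)⟩
    linarith [(abs_le.1 hbd).2]
  have hmono : ∫ _ in (0 : ℝ)..1, (g s ^ 2 - B) ≤ ∫ t in (0 : ℝ)..1, g t ^ 2 :=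
    intervalIntegral.integral_mono_on zero_le_one (by simp)
      ((by fun_prop : Continuous fun t => g t ^ 2).intervalIntegrable _ _) hle
  rw [intervalIntegral.integral_add
    ((by fun_prop : Continuous fun t => g t ^ 2).intervalIntegrable _ _)
    ((by fun_prop : Continuous fun t => 2 * (|g t| * |g' t|)).intervalIntegrable _ _)]
  simp only [intervalIntegral.integral_const, sub_zero, one_smul] at hmono
  linarith

/-- The one-dimensional embedding `W^{1,1}(0,1) ⊂ L^∞(0,1)` applied to `‖f‖²`. -/
theorem enorm_sq_le_lintegral_enorm_sq_add_deriv {E : Type*} [NormedAddCommGroup E]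
    [NormedSpace ℝ E] {f f' : ℝ → E} (hf : ∀ t, HasDerivAt f (f' t) t) (hf' : Continuous f')
    {s : ℝ} (hs : s ∈ Set.Ioo (0 : ℝ) 1) :
    ‖f s‖ₑ ^ 2 ≤ ∫⁻ t in Set.Ioo (0 : ℝ) 1, (‖f t‖ₑ ^ 2 + 2 * (‖f t‖ₑ * ‖f' t‖ₑ)) := by
  obtain ⟨l, hl, hls⟩ := exists_dual_vector'' ℝ (f s)
  have hlg : ∀ t, HasDerivAt (fun t => l (f t)) (l (f' t)) t := fun t =>
    l.hasFDerivAt.comp_hasDerivAt t (hf t)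
  have hlc : Continuous fun t => l (f t) := continuous_iff_continuousAt.2 fun t =>
    (hlg t).continuousAt
  have hlc' : Continuous fun t => l (f' t) := l.continuous.comp hf'
  have key := sq_le_integral_sq_add_deriv hlg hlc' hs
  have hle : ∀ x : E, ‖l x‖ₑ ≤ ‖x‖ₑ := fun x => by
    rw [enorm_le_iff_norm_le]
    exact (l.le_opNorm x).trans (mul_le_of_le_one_left (norm_nonneg x) hl)
  calc ‖f s‖ₑ ^ 2 = ENNReal.ofReal (l (f s) ^ 2) := by
        rw [hls, ← ofReal_norm, ← ENNReal.ofReal_pow (norm_nonneg _)]; rfl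
    _ ≤ ENNReal.ofReal
          (∫ t in Set.Ioo (0 : ℝ) 1, (l (f t) ^ 2 + 2 * (|l (f t)| * |l (f' t)|))) := by
        rw [← integral_Ioc_eq_integral_Ioo, ← intervalIntegral.integral_of_le zero_le_one]
        exact ENNReal.ofReal_le_ofReal key
    _ = ∫⁻ t in Set.Ioo (0 : ℝ) 1,
          ENNReal.ofReal (l (f t) ^ 2 + 2 * (|l (f t)| * |l (f' t)|)) := by
        refine ofReal_integral_eq_lintegral_ofReal ?_ ?_
        · have := ((hlc.pow 2).add (continuous_const.mul
            (hlc.abs.mul hlc'.abs) : Continuous fun t => 2 * (|l (f t)| * |l (f' t)|))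
            ).integrableOn_Icc (μ := volume) (a := 0) (b := 1)
          exact this.mono_set Set.Ioo_subset_Icc_self
        · exact Filter.Eventually.of_forall fun t => by positivity
    _ ≤ _ := by
        refine lintegral_mono fun t => ?_
        rw [ENNReal.ofReal_add (by positivity) (by positivity), ENNReal.ofReal_mul zero_le_two,
          ENNReal.ofReal_mul (abs_nonneg _), ← sq_abs, ENNReal.ofReal_pow (abs_nonneg _),
          ← Real.norm_eq_abs, ← Real.norm_eq_abs, ofReal_norm, ofReal_norm, ENNReal.ofReal_ofNat]
        gcongr <;> exact hle _

theorem slabMeasure_eq_prod (h : ℝ) :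
    slabMeasure h = (volume.restrict (Set.Ioo (0 : ℝ) 1)).prod
      ((volume.restrict (Set.Ioo (0 : ℝ) 1)).prod (volume.restrict (Set.Ioo (-h) 0))) := by
  rw [slabMeasure, Measure.prod_restrict, Measure.prod_restrict]
  rfl

theorem Continuous.memLp_slabMeasure {E : Type*} [NormedAddCommGroup E]
    {f : ℝ × ℝ × ℝ → E} (hf : Continuous f) (h : ℝ) :
    MemLp f 2 (slabMeasure h) := by
  have hK : IsCompact (Set.Icc (0 : ℝ) 1 ×ˢ Set.Icc (0 : ℝ) 1 ×ˢ Set.Icc (-h) 0) :=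
    isCompact_Icc.prod (isCompact_Icc.prod isCompact_Icc)
  have hsub : Set.Ioo (0 : ℝ) 1 ×ˢ Set.Ioo (0 : ℝ) 1 ×ˢ Set.Ioo (-h) 0 ⊆
      Set.Icc (0 : ℝ) 1 ×ˢ Set.Icc (0 : ℝ) 1 ×ˢ Set.Icc (-h) 0 :=
    Set.prod_mono Set.Ioo_subset_Icc_self
      (Set.prod_mono Set.Ioo_subset_Icc_self Set.Ioo_subset_Icc_self)
  have : IsFiniteMeasure (slabMeasure h) := by
    rw [slabMeasure, isFiniteMeasure_restrict]
    exact ((measure_mono hsub).trans_lt hK.measure_lt_top).ne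
  obtain ⟨C, hC⟩ := hK.exists_bound_of_continuousOn hf.continuousOn
  refine MemLp.of_bound hf.aestronglyMeasurable C ?_
  filter_upwards [ae_restrict_mem
    (measurableSet_Ioo.prod (measurableSet_Ioo.prod measurableSet_Ioo))] with p hp
  exact hC p (hsub hp)

/-- The density `‖f‖² + 2‖f‖‖∇f‖`, which dominates `‖f‖²` and its horizontal derivatives. -/
noncomputable def sobolevDensity {E : Type*} [NormedAddCommGroup E] [NormedSpace ℝ E]
    (f : ℝ × ℝ × ℝ → E) (p : ℝ × ℝ × ℝ) : ℝ≥0∞ :=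
  ‖f p‖ₑ ^ 2 + 2 * (‖f p‖ₑ * ‖fderiv ℝ f p‖ₑ)

section

variable {E : Type*} [NormedAddCommGroup E] [NormedSpace ℝ E] {f : ℝ × ℝ × ℝ → E}

theorem measurable_sobolevDensity (hf : ContDiff ℝ 1 f) : Measurable (sobolevDensity f) := by
  have h1 : Measurable fun p => ‖f p‖ₑ := hf.continuous.enorm.measurable
  have h2 : Measurable fun p => ‖fderiv ℝ f p‖ₑ :=
    (hf.continuous_fderiv one_ne_zero).enorm.measurable
  exact (h1.pow_const 2).add ((h1.mul h2).const_mul 2)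

theorem enorm_apply_le_enorm_of_norm_le_one {F G : Type*} [NormedAddCommGroup F]
    [NormedSpace ℝ F] [NormedAddCommGroup G] [NormedSpace ℝ G] (L : F →L[ℝ] G) {x : F}
    (hx : ‖x‖ ≤ 1) : ‖L x‖ₑ ≤ ‖L‖ₑ := by
  rw [enorm_le_iff_norm_le]
  exact (L.le_opNorm x).trans (mul_le_of_le_one_right (norm_nonneg L) hx)

theorem enorm_sq_le_lintegral_sobolevDensity_fst (hf : ContDiff ℝ 1 f) {x : ℝ}
    (hx : x ∈ Set.Ioo (0 : ℝ) 1) (y z : ℝ) :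
    ‖f (x, y, z)‖ₑ ^ 2 ≤ ∫⁻ t in Set.Ioo (0 : ℝ) 1, sobolevDensity f (t, y, z) := by
  have hd : ∀ t, HasDerivAt (fun t => f (t, y, z)) (fderiv ℝ f (t, y, z) (1, 0, 0)) t := fun t =>
    ((hf.differentiable one_ne_zero _).hasFDerivAt).comp_hasDerivAt t
      ((hasDerivAt_id t).prodMk (hasDerivAt_const t (y, z)))
  have hc : Continuous fun t : ℝ => fderiv ℝ f (t, y, z) (1, 0, 0) :=
    ((hf.continuous_fderiv one_ne_zero).comp (by fun_prop)).clm_apply continuous_const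
  refine (enorm_sq_le_lintegral_enorm_sq_add_deriv hd hc hx).trans (lintegral_mono fun t => ?_)
  unfold sobolevDensity
  gcongr
  exact enorm_apply_le_enorm_of_norm_le_one _ (by simp [Prod.norm_def])

theorem enorm_sq_le_lintegral_sobolevDensity_snd (hf : ContDiff ℝ 1 f) {y : ℝ}
    (hy : y ∈ Set.Ioo (0 : ℝ) 1) (x z : ℝ) :
    ‖f (x, y, z)‖ₑ ^ 2 ≤ ∫⁻ t in Set.Ioo (0 : ℝ) 1, sobolevDensity f (x, t, z) := by
  have hd : ∀ t, HasDerivAt (fun t => f (x, t, z)) (fderiv ℝ f (x, t, z) (0, 1, 0)) t := fun t =>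
    ((hf.differentiable one_ne_zero _).hasFDerivAt).comp_hasDerivAt t
      ((hasDerivAt_const t x).prodMk ((hasDerivAt_id t).prodMk (hasDerivAt_const t z)))
  have hc : Continuous fun t : ℝ => fderiv ℝ f (x, t, z) (0, 1, 0) :=
    ((hf.continuous_fderiv one_ne_zero).comp (by fun_prop)).clm_apply continuous_const
  refine (enorm_sq_le_lintegral_enorm_sq_add_deriv hd hc hy).trans (lintegral_mono fun t => ?_)
  unfold sobolevDensity
  gcongr
  exact enorm_apply_le_enorm_of_norm_le_one _ (by simp [Prod.norm_def])

theorem lintegral_sobolevDensity_le (hf : ContDiff ℝ 1 f) (μ : Measure (ℝ × ℝ × ℝ)) :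
    ∫⁻ p, sobolevDensity f p ∂μ ≤
      2 * (eLpNorm f 2 μ * (eLpNorm f 2 μ + eLpNorm (fderiv ℝ f) 2 μ)) := by
  have h1 : Measurable fun p => ‖f p‖ₑ := hf.continuous.enorm.measurable
  have h2 : Measurable fun p => ‖fderiv ℝ f p‖ₑ :=
    (hf.continuous_fderiv one_ne_zero).enorm.measurable
  have hsq : ∫⁻ p, ‖f p‖ₑ ^ 2 ∂μ = eLpNorm f 2 μ ^ 2 := by
    have := eLpNorm_nnreal_pow_eq_lintegral (μ := μ) (f := f) (p := 2) two_ne_zero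
    simpa using this.symm
  have hmul : ∫⁻ p, ‖f p‖ₑ * ‖fderiv ℝ f p‖ₑ ∂μ ≤ eLpNorm f 2 μ * eLpNorm (fderiv ℝ f) 2 μ := by
    have := ENNReal.lintegral_mul_le_Lp_mul_Lq μ Real.HolderConjugate.two_two
      h1.aemeasurable h2.aemeasurable
    simpa [eLpNorm_eq_lintegral_rpow_enorm_toReal] using this
  unfold sobolevDensity
  rw [lintegral_add_left (h1.pow_const 2),
    lintegral_const_mul (f := fun p => ‖f p‖ₑ * ‖fderiv ℝ f p‖ₑ) _ (h1.mul h2), hsq]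
  calc _ ≤ eLpNorm f 2 μ ^ 2 + 2 * (eLpNorm f 2 μ * eLpNorm (fderiv ℝ f) 2 μ) := by gcongr
    _ ≤ (eLpNorm f 2 μ ^ 2 + 2 * (eLpNorm f 2 μ * eLpNorm (fderiv ℝ f) 2 μ)) +
        eLpNorm f 2 μ ^ 2 := le_self_add
    _ = _ := by ring

end

theorem enorm_divH_le {v : ℝ × ℝ × ℝ → ℝ × ℝ} (hv : Differentiable ℝ v) (p : ℝ × ℝ × ℝ) :
    ‖divH v p‖ₑ ≤ 2 * ‖fderiv ℝ v p‖ₑ := by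
  have h1 : fderiv ℝ (fun q => (v q).1) p (1, 0, 0) = (fderiv ℝ v p (1, 0, 0)).1 := by
    rw [((hv p).hasFDerivAt.fst).fderiv]; rfl
  have h2 : fderiv ℝ (fun q => (v q).2) p (0, 1, 0) = (fderiv ℝ v p (0, 1, 0)).2 := by
    rw [((hv p).hasFDerivAt.snd).fderiv]; rfl
  rw [divH, h1, h2, two_mul]
  refine (enorm_add_le _ _).trans (add_le_add ?_ ?_)
  · refine le_trans ?_ (enorm_apply_le_enorm_of_norm_le_one (fderiv ℝ v p)
      (x := (1, 0, 0)) (by simp [Prod.norm_def]))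
    exact enorm_le_iff_norm_le.2 (norm_fst_le _)
  · refine le_trans ?_ (enorm_apply_le_enorm_of_norm_le_one (fderiv ℝ v p)
      (x := (0, 1, 0)) (by simp [Prod.norm_def]))
    exact enorm_le_iff_norm_le.2 (norm_snd_le _)

theorem enorm_integral_divH_le {v : ℝ × ℝ × ℝ → ℝ × ℝ} (hv : ContDiff ℝ 1 v) {h z : ℝ}
    (hz : z ∈ Set.Ioo (-h) 0) (x y : ℝ) :
    ‖∫ ζ in (-h)..z, divH v (x, y, ζ)‖ₑ ≤
      (4 * ENNReal.ofReal h *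
        ∫⁻ ζ in Set.Ioo (-h) 0, ‖fderiv ℝ v (x, y, ζ)‖ₑ ^ 2) ^ ((1 : ℝ) / 2) := by
  have hm : Measurable fun ζ : ℝ => ‖fderiv ℝ v (x, y, ζ)‖ₑ :=
    ((hv.continuous_fderiv one_ne_zero).comp
      (by fun_prop : Continuous fun ζ : ℝ => (x, y, ζ))).enorm.measurable
  have hcs := ENNReal.lintegral_mul_le_Lp_mul_Lq (volume.restrict (Set.Ioo (-h) 0))
    Real.HolderConjugate.two_two hm.aemeasurable (aemeasurable_const (b := (2 : ℝ≥0∞)))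
  calc ‖∫ ζ in (-h)..z, divH v (x, y, ζ)‖ₑ
      = ‖∫ ζ in Set.Ioc (-h) z, divH v (x, y, ζ)‖ₑ := by
        rw [intervalIntegral.integral_of_le hz.1.le]
    _ ≤ ∫⁻ ζ in Set.Ioc (-h) z, ‖divH v (x, y, ζ)‖ₑ := enorm_integral_le_lintegral_enorm _
    _ ≤ ∫⁻ ζ in Set.Ioo (-h) 0, ‖divH v (x, y, ζ)‖ₑ :=
        lintegral_mono_set fun ζ hζ => ⟨hζ.1, hζ.2.trans_lt hz.2⟩
    _ ≤ ∫⁻ ζ in Set.Ioo (-h) 0, ‖fderiv ℝ v (x, y, ζ)‖ₑ * 2 :=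
        lintegral_mono fun ζ => (enorm_divH_le (hv.differentiable one_ne_zero) _).trans_eq
          (mul_comm _ _)
    _ ≤ _ := hcs
    _ = _ := by
        rw [← ENNReal.mul_rpow_of_nonneg _ _ (by norm_num)]
        congr 1
        simp only [ENNReal.rpow_ofNat, lintegral_const, Measure.restrict_apply_univ,
          Real.volume_Ioo, zero_sub, neg_neg]
        ring

theorem enorm_integral_mul_mul_le {v : ℝ × ℝ × ℝ → ℝ × ℝ} {φ ψ : ℝ × ℝ × ℝ → ℝ}
    (hv : ContDiff ℝ 2 v) (hφ : ContDiff ℝ 1 φ) (hψ : Continuous ψ) (h : ℝ) :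
    ‖∫ p, (∫ ζ in (-h)..(p.2.2), divH v (p.1, p.2.1, ζ)) * φ p * ψ p ∂slabMeasure h‖ₑ ≤
      (4 * ENNReal.ofReal h * (∫⁻ p, sobolevDensity (fderiv ℝ v) p ∂slabMeasure h) *
        (∫⁻ p, sobolevDensity φ p ∂slabMeasure h)) ^ ((1 : ℝ) / 2) *
          eLpNorm ψ 2 (slabMeasure h) := by
  set μ : Measure ℝ := volume.restrict (Set.Ioo (0 : ℝ) 1) with hμ
  set ν : Measure ℝ := volume.restrict (Set.Ioo (-h) 0) with hν
  have hslab : slabMeasure h = μ.prod (μ.prod ν) := slabMeasure_eq_prod h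
  have hdv : ContDiff ℝ 1 (fderiv ℝ v) := hv.fderiv_right (by norm_num)
  have hmv := measurable_sobolevDensity hdv
  have hmφ := measurable_sobolevDensity hφ
  have hφm : Measurable fun p => ‖φ p‖ₑ := hφ.continuous.enorm.measurable
  set S : ℝ → ℝ≥0∞ := fun y => ∫⁻ z, ∫⁻ x, sobolevDensity (fderiv ℝ v) (x, y, z) ∂μ ∂ν with hS
  set T : ℝ → ℝ≥0∞ := fun x => ∫⁻ z, ∫⁻ y, sobolevDensity φ (x, y, z) ∂μ ∂ν with hT
  have hSm : Measurable S := by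
    have h0 : Measurable fun q : (ℝ × ℝ) × ℝ =>
      sobolevDensity (fderiv ℝ v) (q.2, q.1.1, q.1.2) := hmv.comp (by fun_prop)
    exact (h0.lintegral_prod_right' (ν := μ)).lintegral_prod_right' (ν := ν)
  have hTm : Measurable T := by
    have h0 : Measurable fun q : (ℝ × ℝ) × ℝ =>
      sobolevDensity φ (q.1.1, q.2, q.1.2) := hmφ.comp (by fun_prop)
    exact (h0.lintegral_prod_right' (ν := μ)).lintegral_prod_right' (ν := ν)
  have hSint : ∫⁻ y, S y ∂μ = ∫⁻ p, sobolevDensity (fderiv ℝ v) p ∂slabMeasure h := by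
    rw [hslab, lintegral_prod_symm' _ hmv, lintegral_prod _
      (Measurable.lintegral_prod_left' hmv).aemeasurable]
  have hTint : ∫⁻ x, T x ∂μ = ∫⁻ p, sobolevDensity φ p ∂slabMeasure h := by
    rw [hslab, lintegral_prod _ hmφ.aemeasurable]
    refine lintegral_congr fun x => ?_
    exact (lintegral_prod_symm' _ (hmφ.comp measurable_prodMk_left)).symm
  have hmem : ∀ᵐ p ∂slabMeasure h,
      p ∈ Set.Ioo (0 : ℝ) 1 ×ˢ Set.Ioo (0 : ℝ) 1 ×ˢ Set.Ioo (-h) 0 :=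
    ae_restrict_mem (measurableSet_Ioo.prod (measurableSet_Ioo.prod measurableSet_Ioo))
  set w : ℝ × ℝ × ℝ → ℝ≥0∞ := fun p =>
    (4 * ENNReal.ofReal h * S p.2.1) ^ ((1 : ℝ) / 2) * ‖φ p‖ₑ with hw
  have hwm : Measurable w :=
    (((hSm.comp (by fun_prop)).const_mul _).pow_const _).mul hφm
  have hwsq : ∫⁻ p, w p ^ (2 : ℝ) ∂slabMeasure h ≤
      4 * ENNReal.ofReal h * (∫⁻ y, S y ∂μ) * ∫⁻ x, T x ∂μ := by
    have hweq : ∀ p, w p ^ (2 : ℝ) = 4 * ENNReal.ofReal h * S p.2.1 * ‖φ p‖ₑ ^ 2 := fun p => by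
      rw [hw, ENNReal.mul_rpow_of_nonneg _ _ zero_le_two, ← ENNReal.rpow_mul]
      simp
    have hm3 : Measurable fun p : ℝ × ℝ × ℝ =>
        4 * ENNReal.ofReal h * S p.2.1 * ‖φ p‖ₑ ^ 2 :=
      ((hSm.comp (by fun_prop)).const_mul _).mul (hφm.pow_const 2)
    simp_rw [hweq]
    rw [hslab, lintegral_prod _ hm3.aemeasurable]
    calc _ ≤ ∫⁻ x, (4 * ENNReal.ofReal h * ∫⁻ y, S y ∂μ) * T x ∂μ := by
          refine lintegral_mono fun x => ?_
          refine (lintegral_prod _ (hm3.comp measurable_prodMk_left).aemeasurable).trans_le ?_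
          rw [← lintegral_const_mul _ hSm, ← lintegral_mul_const _ (hSm.const_mul _)]
          refine lintegral_mono_ae ?_
          filter_upwards [ae_restrict_mem measurableSet_Ioo] with y hy
          have hφz : Measurable fun z : ℝ => ‖φ (x, y, z)‖ₑ ^ 2 :=
            (hφm.comp (by fun_prop : Measurable fun z : ℝ => (x, y, z))).pow_const 2
          refine (lintegral_const_mul (4 * ENNReal.ofReal h * S y) hφz).trans_le ?_
          refine mul_le_mul_right ?_ _
          exact lintegral_mono fun z => enorm_sq_le_lintegral_sobolevDensity_snd hφ hy x z
      _ = _ := by rw [lintegral_const_mul _ hTm]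
  calc _ ≤ ∫⁻ p, ‖(∫ ζ in (-h)..(p.2.2), divH v (p.1, p.2.1, ζ)) * φ p * ψ p‖ₑ ∂slabMeasure h :=
        enorm_integral_le_lintegral_enorm _
    _ ≤ ∫⁻ p, w p * ‖ψ p‖ₑ ∂slabMeasure h := by
        refine lintegral_mono_ae ?_
        filter_upwards [hmem] with p hp
        rw [enorm_mul, enorm_mul]
        gcongr
        refine mul_le_mul_left ?_ _
        refine (enorm_integral_divH_le (hv.of_le (by norm_num)) hp.2.2 p.1 p.2.1).trans ?_
        gcongr
        exact lintegral_mono fun z => enorm_sq_le_lintegral_sobolevDensity_fst hdv hp.1 p.2.1 z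
    _ ≤ (∫⁻ p, w p ^ (2 : ℝ) ∂slabMeasure h) ^ ((1 : ℝ) / 2) *
          (∫⁻ p, ‖ψ p‖ₑ ^ (2 : ℝ) ∂slabMeasure h) ^ ((1 : ℝ) / 2) :=
        ENNReal.lintegral_mul_le_Lp_mul_Lq _ Real.HolderConjugate.two_two hwm.aemeasurable
          hψ.enorm.measurable.aemeasurable
    _ ≤ _ := by
        rw [hSint, hTint] at hwsq
        gcongr
        simp [eLpNorm_eq_lintegral_rpow_enorm_toReal]

/-- The anisotropic estimate of Lemma 2.3 of the paper:
`│∫_Ω (∫_{−h}^{z} ∇₂·v dζ) φ ψ│ ≤ C ‖∇v‖^{1/2}‖∇v‖_{H¹}^{1/2}‖φ‖^{1/2}‖φ‖_{H¹}^{1/2}‖ψ‖`. -/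
theorem anisotropic_estimate (h : ℝ) (hh : 0 < h) :
    ∃ C : ℝ, 0 < C ∧
      ∀ (v : ℝ × ℝ × ℝ → ℝ × ℝ) (φ ψ : ℝ × ℝ × ℝ → ℝ),
        ContDiff ℝ (⊤ : ℕ∞) v → ContDiff ℝ (⊤ : ℕ∞) φ → ContDiff ℝ (⊤ : ℕ∞) ψ →
        HorizontallyPeriodic v → HorizontallyPeriodic φ → HorizontallyPeriodic ψ →
        |∫ p, (∫ ζ in (-h)..(p.2.2), divH v (p.1, p.2.1, ζ)) * φ p * ψ p
            ∂slabMeasure h| ≤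
          C * (eLpNorm (fun p => ‖fderiv ℝ v p‖) 2 (slabMeasure h)).toReal ^ ((1 : ℝ) / 2) *
            ((eLpNorm (fun p => ‖fderiv ℝ v p‖) 2 (slabMeasure h)).toReal +
              (eLpNorm (fun p => ‖fderiv ℝ (fderiv ℝ v) p‖) 2 (slabMeasure h)).toReal) ^
              ((1 : ℝ) / 2) *
            (eLpNorm φ 2 (slabMeasure h)).toReal ^ ((1 : ℝ) / 2) *
            ((eLpNorm φ 2 (slabMeasure h)).toReal +
              (eLpNorm (fun p => ‖fderiv ℝ φ p‖) 2 (slabMeasure h)).toReal) ^ ((1 : ℝ) / 2) *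
            (eLpNorm ψ 2 (slabMeasure h)).toReal := by
  refine ⟨4 * h ^ ((1 : ℝ) / 2), by positivity, ?_⟩
  intro v φ ψ hv hφ hψ _ _ _
  have hv2 : ContDiff ℝ 2 v := contDiff_infty.1 hv 2
  have hφ1 : ContDiff ℝ 1 φ := contDiff_infty.1 hφ 1
  have hdv : ContDiff ℝ 1 (fderiv ℝ v) := hv2.fderiv_right (by norm_num)
  have ha := (hdv.continuous.memLp_slabMeasure h).eLpNorm_ne_top
  have hb := ((hdv.continuous_fderiv one_ne_zero).memLp_slabMeasure h).eLpNorm_ne_top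
  have hc := (hφ1.continuous.memLp_slabMeasure h).eLpNorm_ne_top
  have hd := ((hφ1.continuous_fderiv one_ne_zero).memLp_slabMeasure h).eLpNorm_ne_top
  have he := (hψ.continuous.memLp_slabMeasure h).eLpNorm_ne_top
  have key := enorm_integral_mul_mul_le hv2 hφ1 hψ.continuous h
  have hMv := lintegral_sobolevDensity_le hdv (slabMeasure h)
  have hMφ := lintegral_sobolevDensity_le hφ1 (slabMeasure h)
  rw [eLpNorm_norm (fderiv ℝ v), eLpNorm_norm (fderiv ℝ (fderiv ℝ v)), eLpNorm_norm (fderiv ℝ φ)]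
  generalize eLpNorm (fderiv ℝ v) 2 (slabMeasure h) = a at *
  generalize eLpNorm (fderiv ℝ (fderiv ℝ v)) 2 (slabMeasure h) = b at *
  generalize eLpNorm φ 2 (slabMeasure h) = c at *
  generalize eLpNorm (fderiv ℝ φ) 2 (slabMeasure h) = d at *
  generalize eLpNorm ψ 2 (slabMeasure h) = e at *
  have hbound := key.trans (mul_le_mul_left (ENNReal.rpow_le_rpow
    (mul_le_mul' (mul_le_mul_right hMv _) hMφ) (by norm_num : (0 : ℝ) ≤ 1 / 2)) _)
  have hreal := ENNReal.toReal_mono (by finiteness) hbound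
  rw [toReal_enorm, Real.norm_eq_abs] at hreal
  refine hreal.trans_eq ?_
  rw [← ENNReal.toReal_add ha hb, ← ENNReal.toReal_add hc hd]
  simp only [ENNReal.toReal_mul, ← ENNReal.toReal_rpow, ENNReal.toReal_ofReal hh.le,
    ENNReal.toReal_ofNat]
  have h16 : (16 : ℝ) ^ ((1 : ℝ) / 2) = 4 := by
    rw [← Real.sqrt_eq_rpow, show (16 : ℝ) = 4 ^ 2 by norm_num, Real.sqrt_sq (by norm_num)]
  rw [show (4 * h * (2 * (a.toReal * (a + b).toReal)) * (2 * (c.toReal * (c + d).toReal)) : ℝ) =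
    16 * h * a.toReal * (a + b).toReal * c.toReal * (c + d).toReal by ring]
  rw [Real.mul_rpow (by positivity) (by positivity), Real.mul_rpow (by positivity) (by positivity),
    Real.mul_rpow (by positivity) (by positivity), Real.mul_rpow (by positivity) (by positivity),
    Real.mul_rpow (by positivity) (by positivity), h16]
end

section
/- Let Y : [0, ∞) → [0, ∞) be locally absolutely continuous and let α, β : [0, ∞) → ℝ be locally integrable functions such that dY/dt + α(t) Y(t) ≤ β(t) for almost every t ∈ (0, ∞). Suppose there exist τ > 0 and γ > 0 such that liminf_{t → ∞} ∫_t^{t+τ} α(s) ds ≥ γ, limsup_{t → ∞} ∫_t^{t+τ} α⁻(s) ds < ∞, and lim_{t → ∞} ∫_t^{t+τ} β⁺(s) ds = 0, where α⁻ = max{−α, 0} and β⁺ = max{β, 0}. Then Y(t) → 0 as t → ∞. -/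
open MeasureTheory Filter

/-- Composing an absolutely continuous function with a function that is Lipschitz on its range
gives an absolutely continuous function. -/
theorem LipschitzOnWith.comp_absolutelyContinuousOnInterval {X Z : Type*} [PseudoMetricSpace X]
    [PseudoMetricSpace Z] {g : X → Z} {f : ℝ → X} {a b : ℝ} {K : NNReal}
    (hg : LipschitzOnWith K g (f '' Set.uIcc a b)) (hf : AbsolutelyContinuousOnInterval f a b) :
    AbsolutelyContinuousOnInterval (fun x => g (f x)) a b := by
  rw [absolutelyContinuousOnInterval_iff] at hf ⊢
  intro ε hε
  obtain ⟨δ, hδ, h⟩ := hf (ε / (K + 1)) (by positivity)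
  refine ⟨δ, hδ, fun E hE hEδ => ?_⟩
  calc ∑ i ∈ Finset.range E.1, dist (g (f (E.2 i).1)) (g (f (E.2 i).2))
      ≤ ∑ i ∈ Finset.range E.1, K * dist (f (E.2 i).1) (f (E.2 i).2) :=
        Finset.sum_le_sum fun i hi => hg.dist_le_mul _
          (Set.mem_image_of_mem f (hE.left i hi).left) _
          (Set.mem_image_of_mem f (hE.left i hi).right)
    _ = K * ∑ i ∈ Finset.range E.1, dist (f (E.2 i).1) (f (E.2 i).2) :=
        (Finset.mul_sum _ _ _).symm
    _ ≤ K * (ε / (K + 1)) := by gcongr; exact (h E hE hEδ).le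
    _ < (K + 1) * (ε / (K + 1)) := by gcongr; linarith
    _ = ε := by field

/-- The exponential of an absolutely continuous function is absolutely continuous. -/
theorem AbsolutelyContinuousOnInterval.exp {f : ℝ → ℝ} {a b : ℝ}
    (hf : AbsolutelyContinuousOnInterval f a b) :
    AbsolutelyContinuousOnInterval (fun x => Real.exp (f x)) a b := by
  obtain ⟨K, hK⟩ := (Real.contDiff_exp (n := 1)).contDiffOn.exists_lipschitzOnWith (by decide)
    (convex_Icc (sInf (f '' Set.uIcc a b)) (sSup (f '' Set.uIcc a b))) isCompact_Icc
  have hbdd := isCompact_uIcc.image_of_continuousOn hf.continuousOn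
  refine (hK.mono ?_).comp_absolutelyContinuousOnInterval hf
  exact fun y hy => ⟨csInf_le hbdd.bddBelow hy, le_csSup hbdd.bddAbove hy⟩

/-- Grönwall's inequality in integrated form: if `y' + α y ≤ b` almost everywhere with `b ≥ 0`,
and `∫ α` over every interval `[r, t]` with `a ≤ r` is at least `-C`, then
`y t ≤ exp (-∫ α) * y a + exp C * ∫ b`. -/
theorem le_exp_neg_integral_mul_add_of_ae_deriv_add_mul_le {y y' α b : ℝ → ℝ} {a t C : ℝ}
    (hat : a ≤ t) (hy' : IntervalIntegrable y' volume a t)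
    (hα : IntervalIntegrable α volume a t) (hb : IntervalIntegrable b volume a t)
    (hy : ∀ x ∈ Set.Icc a t, y x = y a + ∫ s in a..x, y' s) (hb0 : ∀ x, 0 ≤ b x)
    (hode : ∀ᵐ x, x ∈ Set.Icc a t → y' x + α x * y x ≤ b x)
    (hC : ∀ r ∈ Set.Icc a t, -C ≤ ∫ s in r..t, α s) :
    y t ≤ Real.exp (-∫ s in a..t, α s) * y a + Real.exp C * ∫ s in a..t, b s := by
  have hIcc := Set.uIcc_of_le hat
  set A : ℝ → ℝ := fun x => ∫ s in a..x, α s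
  set G : ℝ → ℝ := fun x => y a + ∫ s in a..x, y' s with hG
  have hE : AbsolutelyContinuousOnInterval (fun x => Real.exp (A x)) a t :=
    (hα.absolutelyContinuousOnInterval_intervalIntegral Set.left_mem_uIcc).exp
  have hGac : AbsolutelyContinuousOnInterval G a t :=
    (contDiff_const (c := y a)).contDiffOn.absolutelyContinuousOnInterval.add
      (hy'.absolutelyContinuousOnInterval_intervalIntegral Set.left_mem_uIcc)
  have hZ := hE.fun_mul hGac
  have hderiv : ∀ᵐ x, x ∈ Set.Icc a t →
      deriv (fun x => Real.exp (A x) * G x) x ≤ Real.exp (C + A t) * b x := by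
    filter_upwards [hα.ae_hasDerivAt_integral, hy'.ae_hasDerivAt_integral, hode]
      with x h₁ h₂ h₃ hx
    have hx' : x ∈ Set.uIcc a t := hIcc ▸ hx
    have hdA : HasDerivAt A (α x) x := h₁ hx' a Set.left_mem_uIcc
    have hdG : HasDerivAt G (y' x) x := (h₂ hx' a Set.left_mem_uIcc).const_add _
    rw [(hdA.exp.fun_mul hdG).deriv]
    have hAx : A x ≤ C + A t := by
      have hsplit : A x + ∫ s in x..t, α s = A t :=
        intervalIntegral.integral_add_adjacent_intervals
          (hα.mono_set (Set.uIcc_subset_uIcc_left hx'))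
          (hα.mono_set (Set.uIcc_subset_uIcc_right hx'))
      linarith [hC x hx]
    calc Real.exp (A x) * α x * G x + Real.exp (A x) * y' x
        = Real.exp (A x) * (y' x + α x * y x) := by rw [hy x hx]; ring
      _ ≤ Real.exp (A x) * b x := by gcongr; exact h₃ hx
      _ ≤ Real.exp (C + A t) * b x := by gcongr; exact hb0 x
  have hint := intervalIntegral.integral_mono_ae_restrict hat hZ.intervalIntegrable_deriv
    (hb.const_mul (Real.exp (C + A t))) ((ae_restrict_iff' measurableSet_Icc).2 hderiv)
  rw [hZ.integral_deriv_eq_sub, intervalIntegral.integral_const_mul] at hint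
  have hAa : A a = 0 := intervalIntegral.integral_same
  have hGa : G a = y a := by simp [hG]
  have hGt : G t = y t := (hy t ⟨hat, le_rfl⟩).symm
  rw [hAa, hGa, hGt, Real.exp_zero, one_mul, Real.exp_add] at hint
  change y t ≤ Real.exp (-A t) * y a + _
  rw [Real.exp_neg, ← mul_le_mul_iff_of_pos_left (Real.exp_pos (A t))]
  have hne := (Real.exp_pos (A t)).ne'
  calc Real.exp (A t) * y t
      ≤ y a + Real.exp C * Real.exp (A t) * ∫ s in a..t, b s := by linarith
    _ = _ := by field_simp

/-- A nonnegative function vanishes at infinity if it contracts over each window of length `τ`,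
and stays controlled within each window, up to arbitrarily small errors. -/
theorem tendsto_zero_of_eventually_le_mul_add {Y : ℝ → ℝ} {τ q B : ℝ} (hτ : 0 < τ)
    (hq0 : 0 ≤ q) (hq1 : q < 1) (hB : 0 < B) (hY : ∀ᶠ t in atTop, 0 ≤ Y t)
    (hcontr : ∀ δ > 0, ∀ᶠ t in atTop, Y (t + τ) ≤ q * Y t + δ)
    (hgrow : ∀ δ > 0, ∀ᶠ s in atTop, ∀ t ∈ Set.Icc s (s + τ), Y t ≤ B * Y s + δ) :
    Tendsto Y atTop (nhds 0) := by
  refine Metric.tendsto_nhds.2 fun ε hε => ?_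
  have hq : 0 < 1 - q := by linarith
  obtain ⟨T, hT⟩ := eventually_atTop.1 (hY.and
    ((hcontr ((1 - q) * (ε / (4 * B))) (by positivity)).and (hgrow (ε / 4) (by positivity))))
  have hseq : ∀ n : ℕ, Y (T + n * τ) ≤ q ^ n * Y T + ε / (4 * B) := by
    intro n
    induction n with
    | zero => simp; positivity
    | succ n ih =>
      have h := (hT (T + n * τ) (by simp; positivity)).2.1
      have hcast : T + ((n + 1 : ℕ) : ℝ) * τ = T + n * τ + τ := by push_cast; ring
      rw [hcast, pow_succ]
      linarith [mul_le_mul_of_nonneg_left ih hq0]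
  have hpow : Tendsto (fun n : ℕ => q ^ n * Y T) atTop (nhds 0) := by
    simpa using (tendsto_pow_atTop_nhds_zero_of_lt_one hq0 hq1).mul_const (Y T)
  have hfloor : Tendsto (fun t : ℝ => ⌊(t - T) / τ⌋₊) atTop atTop :=
    tendsto_nat_floor_atTop.comp
      ((tendsto_atTop_add_const_right _ (-T) tendsto_id).atTop_div_const hτ)
  filter_upwards [hfloor.eventually (hpow.eventually_lt_const (u := ε / (4 * B)) (by positivity)),
    eventually_ge_atTop T] with t ht htT
  set n := ⌊(t - T) / τ⌋₊
  have hn₁ : n * τ ≤ t - T :=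
    (le_div_iff₀ hτ).1 (Nat.floor_le (div_nonneg (sub_nonneg.2 htT) hτ.le))
  have hn₂ : t - T < (n + 1) * τ := (div_lt_iff₀ hτ).1 (Nat.lt_floor_add_one _)
  have h := (hT (T + n * τ) (by simp; positivity)).2.2 t ⟨by linarith, by linarith⟩
  have hlt : B * Y (T + n * τ) < B * (ε / (4 * B) + ε / (4 * B)) := by
    gcongr
    linarith [hseq n]
  have hBε : B * (ε / (4 * B) + ε / (4 * B)) = ε / 2 := by field
  rw [Real.dist_eq, sub_zero, abs_of_nonneg (hT t htT).1]
  linarith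

/-- The generalized Grönwall inequality (Lemma 2.4 of the paper).  The locally
absolutely continuous function `Y : [0,∞) → [0,∞)` is encoded by a locally integrable
a.e. derivative `Y'` together with the fundamental theorem of calculus identity
`Y t = Y 0 + ∫₀ᵗ Y'`. -/
theorem generalized_gronwall
    (Y Y' α β : ℝ → ℝ)
    (hYnonneg : ∀ t : ℝ, 0 ≤ t → 0 ≤ Y t)
    (hY'int : ∀ a b : ℝ, IntervalIntegrable Y' volume a b)
    (hYac : ∀ t : ℝ, 0 ≤ t → Y t = Y 0 + ∫ s in (0 : ℝ)..t, Y' s)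
    (hαint : ∀ a b : ℝ, IntervalIntegrable α volume a b)
    (hβint : ∀ a b : ℝ, IntervalIntegrable β volume a b)
    (hode : ∀ᵐ t ∂volume.restrict (Set.Ioi (0 : ℝ)), Y' t + α t * Y t ≤ β t)
    (τ γ : ℝ) (hτ : 0 < τ) (hγ : 0 < γ)
    (hliminf : ∀ ε > (0 : ℝ), ∀ᶠ t in atTop, γ - ε ≤ ∫ s in t..(t + τ), α s)
    (hlimsup : ∃ M : ℝ, ∀ᶠ t in atTop, (∫ s in t..(t + τ), max (-α s) 0) ≤ M)
    (hβlim : Tendsto (fun t => ∫ s in t..(t + τ), max (β s) 0) atTop (nhds 0)) :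
    Tendsto Y atTop (nhds 0) := by
  obtain ⟨M, hM⟩ := hlimsup
  have hβ' : ∀ a b : ℝ, IntervalIntegrable (fun s => max (β s) 0) volume a b := fun a b =>
    ⟨(hβint a b).1.pos_part, (hβint a b).2.pos_part⟩
  have hα' : ∀ a b : ℝ, IntervalIntegrable (fun s => max (-α s) 0) volume a b := fun a b =>
    ⟨(hαint a b).1.neg_part, (hαint a b).2.neg_part⟩
  have hode' : ∀ᵐ x, 0 < x → Y' x + α x * Y x ≤ β x :=
    (ae_restrict_iff' measurableSet_Ioi).1 hode
  obtain ⟨T, hT⟩ := eventually_atTop.1 (hM.and (eventually_gt_atTop 0))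
  have hαlow : ∀ r t, T ≤ r → r ≤ t → t ≤ r + τ → -M ≤ ∫ s in r..t, α s := by
    intro r t hr hrt htr
    have h₁ : ∫ s in r..t, -α s ≤ ∫ s in r..t, max (-α s) 0 :=
      intervalIntegral.integral_mono hrt (hαint r t).neg (hα' r t) fun s => le_max_left _ _
    have h₂ : ∫ s in r..t, max (-α s) 0 ≤ ∫ s in r..(r + τ), max (-α s) 0 :=
      intervalIntegral.integral_mono_interval le_rfl hrt htr
        (Eventually.of_forall fun s => le_max_right _ _) (hα' _ _)
    rw [intervalIntegral.integral_neg] at h₁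
    linarith [(hT r hr).1]
  have hmain : ∀ s t, T ≤ s → s ≤ t → t ≤ s + τ → Y t ≤ Real.exp (-∫ r in s..t, α r) * Y s +
      Real.exp M * ∫ r in s..(s + τ), max (β r) 0 := by
    intro s t hs hst hts
    have hs0 : 0 < s := (hT s hs).2
    have h := le_exp_neg_integral_mul_add_of_ae_deriv_add_mul_le (y := Y) (C := M) hst
      (hY'int s t) (hαint s t) (hβ' s t)
      (fun x hx => by
        rw [hYac x (hs0.le.trans hx.1), hYac s hs0.le, add_assoc,
          intervalIntegral.integral_add_adjacent_intervals (hY'int _ _) (hY'int _ _)])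
      (fun x => le_max_right _ _)
      (by
        filter_upwards [hode'] with x hx hxI
        exact (hx (hs0.trans_le hxI.1)).trans (le_max_left _ _))
      (fun r hr => hαlow r t (hs.trans hr.1) hr.2 (by linarith [hr.1]))
    have hmono : ∫ r in s..t, max (β r) 0 ≤ ∫ r in s..(s + τ), max (β r) 0 :=
      intervalIntegral.integral_mono_interval le_rfl hst hts
        (Eventually.of_forall fun s => le_max_right _ _) (hβ' _ _)
    linarith [mul_le_mul_of_nonneg_left hmono (Real.exp_pos M).le]
  have hsmall : ∀ δ > 0, ∀ᶠ s in atTop,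
      Real.exp M * ∫ r in s..(s + τ), max (β r) 0 < δ := fun δ hδ =>
    (by simpa using hβlim.const_mul (Real.exp M) : Tendsto _ _ (nhds (0 : ℝ))).eventually_lt_const
      hδ
  refine tendsto_zero_of_eventually_le_mul_add (q := Real.exp (-(γ / 2))) (B := Real.exp M) hτ
    (Real.exp_pos _).le (Real.exp_lt_one_iff.2 (by linarith)) (Real.exp_pos _)
    ((eventually_ge_atTop 0).mono hYnonneg) (fun δ hδ => ?_) (fun δ hδ => ?_)
  · filter_upwards [hsmall δ hδ, eventually_ge_atTop T, hliminf (γ / 2) (by linarith)]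
      with t h₁ ht h₂
    have hexp : Real.exp (-∫ r in t..(t + τ), α r) * Y t ≤ Real.exp (-(γ / 2)) * Y t := by
      gcongr
      · exact hYnonneg t (hT t ht).2.le
      · linarith
    linarith [hmain t (t + τ) ht (by linarith) le_rfl]
  · filter_upwards [hsmall δ hδ, eventually_ge_atTop T] with s h₁ hs t ht
    have hexp : Real.exp (-∫ r in s..t, α r) * Y s ≤ Real.exp M * Y s := by
      gcongr
      · exact hYnonneg s (hT s hs).2.le
      · linarith [hαlow s t hs ht.1 ht.2]
    linarith [hmain s t hs ht.1 ht.2]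
end
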